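/- Let U ⊆ ℝⁿ be open, let g̃_{μν} : U → ℝ be smooth, symmetric and pointwise invertible with smooth inverse g̃^{μν}, let A_{iμ} : U → ℝ be smooth (i ∈ {1,2,3}), and let h > 0 be constant. Define Ã^{αi} := −(1/h) g̃^{αν} A_{iν}, h̃^{ij} := (1/h) δ^{ij} + (1/h²) g̃^{μν} A_{iν} A_{jμ}, Γ̃^σ_{μν} := (1/2) g̃^{σρ}(∂_μ g̃_{νρ} + ∂_ν g̃_{μρ} − ∂_ρ g̃_{μν}), F^μ_{βi} := (1/2) g̃^{αμ}(∂_α A_{βi} − ∂_β A_{αi} − (1/h) ε_{ijk} A_{jα} A_{kβ}), Γ^σ_{μν} := Γ̃^σ_{μν} − (1/h)(A_{μi} F^σ_{νi} + A_{νi} F^σ_{μi}), D^μ_{ij} := 0, E^k_{αβ} := −(1/(2h))(∂_α A_{βk} + ∂_β A_{αk} − 2 A_{kμ} Γ^μ_{αβ}), B^k_{αi} := −(1/h) A_{kμ} F^μ_{αi} − (1/(2h)) A_{jα} ε_{kij}, H^i_{jk} := −(1/2) ε_{ijk}. Let V be the complex vector space of totally symmetric traceless rank-l tensors (l ≥ 0)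 and let D_i ∈ End(V) be the operators defined below (D_i = 0 for l = 0). Then for every smooth f : U → V: g̃^{αβ} ∂_α ∂_β f + h̃^{ij} D_i D_j f + 2 Ã^{αi} ∂_α (D_i f) + ( E^i_{αβ} g̃^{αβ} + 2 B^i_{αj} Ã^{αj} + H^i_{jk} h̃^{jk} ) D_i f + ( −Γ^μ_{αβ} g̃^{αβ} + 2 F^μ_{αj} Ã^{αj} + D^μ_{jk} h̃^{jk} ) ∂_μ f = g̃^{αβ} ( (∂_α − (1/h) A_{iα} D_i)(∂_β − (1/h) A_{jβ} D_j) f − Γ̃^μ_{αβ} (∂_μ − (1/h) A_{iμ} D_i) f ) − (l(l+1)/h) f. -/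

import Mathlib

noncomputable section

/-- The totally antisymmetric Levi-Civita symbol on three indices with ε₀₁₂ = 1
(indices written 1,2,3 in the paper). -/
def eps (i j k : Fin 3) : ℝ :=
  ((((i : ℤ) - (j : ℤ)) * ((j : ℤ) - (k : ℤ)) * ((k : ℤ) - (i : ℤ))) / 2 : ℤ)

/-- The Levi-Civita symbol as a complex number. -/
def epsC (i j k : Fin 3) : ℂ := ((eps i j k : ℝ) : ℂ)

/-- The partial derivative `∂_μ f` of a function on `ℝⁿ`. -/
def pd {n : ℕ} {W : Type*} [NormedAddCommGroup W] [NormedSpace ℝ W]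
    (μ : Fin n) (f : (Fin n → ℝ) → W) : (Fin n → ℝ) → W :=
  fun x => fderiv ℝ f x (Pi.single μ 1)

/-- The index tuple obtained from `v : Fin l → Fin 3` by deleting the `r`-th entry, keeping
the remaining entries in order, and appending `k` as the new last entry. -/
def removeAppend (l : ℕ) (v : Fin l → Fin 3) (r : Fin l) (k : Fin 3) : Fin l → Fin 3 :=
  fun t =>
    if h : (t : ℕ) + 1 < l then
      (if (t : ℕ) < (r : ℕ) then v t else v ⟨(t : ℕ) + 1, h⟩)
    else k

/-- The operator `D_i` on rank-`l` tensors: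
`(D_i f)_{i₁…i_l} = −∑_{r=1}^{l} ∑_{k} ε_{k i i_r} f_{i₁…î_r…i_l k}`. -/
def Dop (l : ℕ) (i : Fin 3) (f : (Fin l → Fin 3) → ℂ) : (Fin l → Fin 3) → ℂ :=
  fun v => -∑ r : Fin l, ∑ k : Fin 3, epsC k i (v r) * f (removeAppend l v r k)

/-- A rank-`l` tensor is totally symmetric if its components are invariant under every
permutation of the indices. -/
def IsTotallySymmetric (l : ℕ) (f : (Fin l → Fin 3) → ℂ) : Prop :=
  ∀ (σ : Equiv.Perm (Fin l)) (v : Fin l → Fin 3), f (v ∘ σ) = f v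

/-- A rank-`l` tensor is traceless if contracting any two of its indices against the
Kronecker delta gives zero. -/
def IsTraceless (l : ℕ) (f : (Fin l → Fin 3) → ℂ) : Prop :=
  ∀ (r s : Fin l), r ≠ s → ∀ v : Fin l → Fin 3,
    ∑ k : Fin 3, f (fun t => if t = r then k else if t = s then k else v t) = 0

/-!
Up to the factor `-(1/h) A_{iμ}`, the coefficient of `D_i f` contains the same combination
`-Γ^μ_{αβ} g̃^{αβ} + 2 F^μ_{αj} Ã^{αj}` as the coefficient of `∂_μ f`. Tracing
`Γ^μ_{αβ} - Γ̃^μ_{αβ} = -(1/h) (A_{iα} F^μ_{βi} + A_{iβ} F^μ_{αi})` against `g̃` gives exactly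
`2 F^μ_{αj} Ã^{αj}`, so `F` cancels and only `-Γ̃^μ_{αβ} g̃^{αβ}` survives. The Levi-Civita terms
in `B` and `H` vanish, being contracted with something symmetric. What remains is the expansion of
the gauge-covariant Laplacian plus the part `(1/h) D_i D_i` of `h̃^{ij} D_i D_j`.

That part is a Casimir element: in `D_i D_i f` a pair of tensor slots `r = s` contributes `-2 f`,
and a pair `r ≠ s` contributes `-f`, because contracting the product of two Levi-Civita symbols
leaves a trace of `f`, which is zero, minus `f` with the two slots exchanged. The total is
`-l (l + 1) f`.
-/

section LeviCivita

/-- The integer-valued Levi-Civita symbol underlying `eps` and `epsC`; identities among its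
products are decidable. -/
def epsInt (i j k : Fin 3) : ℤ :=
  (((i : ℤ) - (j : ℤ)) * ((j : ℤ) - (k : ℤ)) * ((k : ℤ) - (i : ℤ))) / 2

lemma eps_eq_intCast (i j k : Fin 3) : eps i j k = epsInt i j k := rfl

lemma epsC_eq_intCast (i j k : Fin 3) : epsC i j k = epsInt i j k :=
  Complex.ofReal_intCast _

lemma eps_swap_right (i j k : Fin 3) : eps i k j = -eps i j k := by
  simp only [eps_eq_intCast]
  revert i j k
  exact_mod_cast (by decide : ∀ i j k : Fin 3, epsInt i k j = -epsInt i j k)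

lemma sum_epsC_mul_epsC (a b k m : Fin 3) :
    ∑ i, epsC k i a * epsC m i b
      = (if k = m then if a = b then 1 else 0 else 0)
        - (if k = b then if m = a then 1 else 0 else 0) := by
  simp only [epsC_eq_intCast]
  revert a b k m
  exact_mod_cast (by decide : ∀ a b k m : Fin 3, ∑ i, epsInt k i a * epsInt m i b
    = (if k = m then if a = b then 1 else 0 else 0)
      - (if k = b then if m = a then 1 else 0 else 0))

lemma sum_sum_epsC_mul_epsC_mul (a b : Fin 3) (G : Fin 3 → Fin 3 → ℂ) :
    ∑ k, ∑ m, (∑ i, epsC k i a * epsC m i b) * G k m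
      = (if a = b then ∑ k, G k k else 0) - G b a := by
  simp only [sum_epsC_mul_epsC, sub_mul, ite_mul, one_mul, zero_mul, Finset.sum_sub_distrib,
    Finset.sum_ite_irrel, Finset.sum_ite_eq, Finset.sum_ite_eq', Finset.sum_const_zero,
    Finset.mem_univ, if_true]

lemma sum_sum_epsC_mul_epsC_mul_self (a : Fin 3) (G : Fin 3 → ℂ) :
    ∑ k, ∑ m, (∑ i, epsC k i a * epsC m i k) * G m = -2 * G a := by
  have hcontract (m : Fin 3) :
      ∑ k, ∑ i, epsC k i a * epsC m i k = if m = a then -2 else 0 := by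
    simp only [epsC_eq_intCast]
    revert a m
    exact_mod_cast (by decide : ∀ a m : Fin 3,
      ∑ k, ∑ i, epsInt k i a * epsInt m i k = if m = a then -2 else 0)
  rw [Finset.sum_comm]
  simp only [← Finset.sum_mul, hcontract, ite_mul, zero_mul, Finset.sum_ite_eq',
    Finset.mem_univ, if_true]

end LeviCivita

section Casimir

open Function (update)

variable {l : ℕ} {f : (Fin l → Fin 3) → ℂ}

lemma removeAppend_eq_update_comp_cycleIcc (v : Fin (l + 1) → Fin 3) (r : Fin (l + 1))
    (k : Fin 3) :
    removeAppend (l + 1) v r k = update v r k ∘ Fin.cycleIcc r (Fin.last l) := by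
  funext t
  rw [Function.comp_apply, removeAppend]
  rcases lt_or_ge t r with htr | hrt
  · have htl : (t : ℕ) + 1 < l + 1 := by lia
    rw [dif_pos htl, if_pos (Fin.lt_def.mp htr), Fin.cycleIcc_of_lt htr,
      Function.update_of_ne htr.ne]
  rcases (Fin.le_last t).lt_or_eq with htl | rfl
  · have hlt : (t : ℕ) + 1 < l + 1 := by simpa [Fin.lt_def] using htl
    have hsucc : t + 1 = ⟨t + 1, hlt⟩ := Fin.ext (Fin.val_add_one_of_lt htl)
    have hne : (⟨t + 1, hlt⟩ : Fin (l + 1)) ≠ r := by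
      simpa only [ne_eq, Fin.ext_iff] using (Nat.lt_succ_of_le hrt).ne'
    rw [dif_pos hlt, if_neg (Fin.le_def.mp hrt).not_gt, Fin.cycleIcc_of_ge_of_lt hrt htl, hsucc,
      Function.update_of_ne hne]
  · rw [dif_neg (by simp), Fin.cycleIcc_of_last hrt, Function.update_self]

namespace IsTotallySymmetric

lemma apply_removeAppend (hf : IsTotallySymmetric l f) (v : Fin l → Fin 3) (r : Fin l)
    (k : Fin 3) : f (removeAppend l v r k) = f (update v r k) := by
  cases l with
  | zero => exact r.elim0
  | succ l => rw [removeAppend_eq_update_comp_cycleIcc, hf]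

lemma Dop_apply (hf : IsTotallySymmetric l f) (i : Fin 3) (v : Fin l → Fin 3) :
    Dop l i f v = -∑ r, ∑ k, epsC k i (v r) * f (update v r k) := by
  simp only [Dop, hf.apply_removeAppend]

protected lemma Dop (hf : IsTotallySymmetric l f) (i : Fin 3) :
    IsTotallySymmetric l (Dop l i f) := by
  intro σ v
  rw [hf.Dop_apply, hf.Dop_apply,
    ← Equiv.sum_comp σ fun r => ∑ k, epsC k i (v r) * f (update v r k)]
  refine congrArg _ (Finset.sum_congr rfl fun r _ => Finset.sum_congr rfl fun k _ => ?_)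
  rw [← hf σ (update v (σ r) k), Function.update_comp_eq_of_injective _ σ.injective,
    Function.comp_apply]

lemma Dop_Dop_apply (hf : IsTotallySymmetric l f) (i j : Fin 3) (v : Fin l → Fin 3) :
    Dop l i (Dop l j f) v
      = ∑ r, ∑ s, ∑ k, ∑ m, epsC k i (v r) * epsC m j (update v r k s)
          * f (update (update v r k) s m) := by
  simp only [(hf.Dop j).Dop_apply, hf.Dop_apply, mul_neg, Finset.sum_neg_distrib, neg_neg,
    Finset.mul_sum, mul_assoc]
  exact Finset.sum_congr rfl fun r _ => Finset.sum_comm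

lemma apply_update_update_swap (hf : IsTotallySymmetric l f) (v : Fin l → Fin 3) (r s : Fin l) :
    f (update (update v r (v s)) s (v r)) = f v := by
  rw [← Equiv.comp_swap_eq_update, hf]

end IsTotallySymmetric

lemma IsTraceless.sum_apply_update_update (hf : IsTraceless l f) {r s : Fin l} (hrs : r ≠ s)
    (v : Fin l → Fin 3) : ∑ k, f (update (update v s k) r k) = 0 := by
  convert hf r s hrs v using 3 with k
  funext t
  simp only [Function.update_apply]

lemma sum_epsC_mul_epsC_mul_update_update (hsymm : IsTotallySymmetric l f) (htr : IsTraceless l f)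
    (v : Fin l → Fin 3) (r s : Fin l) :
    ∑ k, ∑ m, (∑ i, epsC k i (v r) * epsC m i (update v r k s)) * f (update (update v r k) s m)
      = -(1 + if r = s then 1 else 0) * f v := by
  rcases eq_or_ne r s with rfl | hrs
  · simp only [Function.update_self, Function.update_idem]
    rw [sum_sum_epsC_mul_epsC_mul_self, Function.update_eq_self]
    norm_num
  · simp only [Function.update_of_ne hrs.symm]
    rw [sum_sum_epsC_mul_epsC_mul, htr.sum_apply_update_update hrs.symm,
      hsymm.apply_update_update_swap, if_neg hrs, ite_self]
    ring

theorem sum_Dop_Dop (hsymm : IsTotallySymmetric l f) (htr : IsTraceless l f) :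
    ∑ i, Dop l i (Dop l i f) = -(l * (l + 1) : ℝ) • f := by
  funext v
  calc (∑ i, Dop l i (Dop l i f)) v
      = ∑ r, ∑ s, ∑ k, ∑ m, (∑ i, epsC k i (v r) * epsC m i (update v r k s))
          * f (update (update v r k) s m) := by
        simp only [Finset.sum_apply, hsymm.Dop_Dop_apply, Finset.sum_mul]
        exact Finset.sum_comm.trans <| Finset.sum_congr rfl fun r _ => Finset.sum_comm.trans <|
          Finset.sum_congr rfl fun s _ => Finset.sum_comm.trans <|
            Finset.sum_congr rfl fun k _ => Finset.sum_comm
    _ = ∑ r : Fin l, ∑ s, -(1 + if r = s then 1 else 0) * f v := by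
        simp only [sum_epsC_mul_epsC_mul_update_update hsymm htr]
    _ = (-(l * (l + 1) : ℝ) • f) v := by
        simp only [← Finset.sum_mul, Finset.sum_neg_distrib, Finset.sum_add_distrib,
          Finset.sum_ite_eq, Finset.mem_univ, if_true, Finset.sum_const, Finset.card_univ,
          Fintype.card_fin, nsmul_eq_mul, Pi.smul_apply, Complex.real_smul]
        push_cast
        ring

/-- `Dop l i` as a continuous `ℝ`-linear endomorphism of the space of rank-`l` tensors, the form in
which it can be differentiated through. -/
def DopL (l : ℕ) (i : Fin 3) : ((Fin l → Fin 3) → ℂ) →L[ℝ] ((Fin l → Fin 3) → ℂ) :=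
  LinearMap.toContinuousLinearMap
    { toFun := Dop l i
      map_add' f g := by
        funext v
        simp only [Dop, Pi.add_apply, mul_add, Finset.sum_add_distrib, neg_add]
      map_smul' t f := by
        funext v
        simp only [Dop, Pi.smul_apply, mul_smul_comm, Finset.smul_sum, smul_neg, RingHom.id_apply] }

end Casimir

section PartialDerivative

variable {n : ℕ} {ι W : Type*} [Fintype ι] [NormedAddCommGroup W] [NormedSpace ℝ W]

lemma pd_clm_apply {W' : Type*} [NormedAddCommGroup W'] [NormedSpace ℝ W'] (L : W →L[ℝ] W')
    {f : (Fin n → ℝ) → W} {x : Fin n → ℝ} (hf : DifferentiableAt ℝ f x) (α : Fin n) :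
    pd α (fun y => L (f y)) x = L (pd α f x) := by
  have hcomp : HasFDerivAt (fun y => L (f y)) (L.comp (fderiv ℝ f x)) x :=
    L.hasFDerivAt.comp x hf.hasFDerivAt
  rw [pd, hcomp.fderiv, ContinuousLinearMap.comp_apply, pd]

lemma pd_smul {a : (Fin n → ℝ) → ℝ} {f : (Fin n → ℝ) → W} {x : Fin n → ℝ}
    (ha : DifferentiableAt ℝ a x) (hf : DifferentiableAt ℝ f x) (α : Fin n) :
    pd α (fun y => a y • f y) x = pd α a x • f x + a x • pd α f x := by
  simp [pd, fderiv_fun_smul ha hf, add_comm]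

lemma pd_sum {u : ι → (Fin n → ℝ) → W} {x : Fin n → ℝ} (hu : ∀ i, DifferentiableAt ℝ (u i) x)
    (α : Fin n) : pd α (fun y => ∑ i, u i y) x = ∑ i, pd α (u i) x := by
  rw [pd, fderiv_fun_sum fun i _ => hu i, sum_apply]
  rfl

lemma differentiableAt_pd {f : (Fin n → ℝ) → W} {x : Fin n → ℝ} (hf : ContDiffAt ℝ 2 f x)
    (β : Fin n) : DifferentiableAt ℝ (pd β f) x :=
  ((hf.fderiv_right (m := 1) le_rfl).differentiableAt one_ne_zero).clm_apply
    (differentiableAt_const _)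

/-- The gauge-covariant derivative `∂_β - c A_{iβ} D_i` of a `W`-valued field with coupling
constant `c`, for a gauge potential `A` acting on `W` through the operators `D i`. -/
def gaugeDeriv (c : ℝ) (A : ι → Fin n → (Fin n → ℝ) → ℝ) (D : ι → W →L[ℝ] W) (β : Fin n)
    (u : (Fin n → ℝ) → W) : (Fin n → ℝ) → W :=
  fun x => pd β u x - c • ∑ i, A i β x • D i (u x)

lemma gaugeDeriv_gaugeDeriv (c : ℝ) {A : ι → Fin n → (Fin n → ℝ) → ℝ} (D : ι → W →L[ℝ] W)
    {f : (Fin n → ℝ) → W} {x : Fin n → ℝ} (hA : ∀ i μ, DifferentiableAt ℝ (A i μ) x)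
    (hf : ContDiffAt ℝ 2 f x) (α β : Fin n) :
    gaugeDeriv c A D α (gaugeDeriv c A D β f) x
      = pd α (pd β f) x - c • ∑ i, pd α (A i β) x • D i (f x)
        - c • ((∑ i, A i β x • D i (pd α f x)) + ∑ i, A i α x • D i (pd β f x))
        + c ^ 2 • ∑ i, ∑ j, (A i α x * A j β x) • D i (D j (f x)) := by
  have hfx : DifferentiableAt ℝ f x := hf.differentiableAt two_ne_zero
  have hDf (i : ι) : DifferentiableAt ℝ (fun y => D i (f y)) x :=
    (D i).differentiableAt.comp x hfx
  have hsum : DifferentiableAt ℝ (fun y => ∑ i, A i β y • D i (f y)) x :=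
    DifferentiableAt.fun_sum fun i _ => (hA i β).fun_smul (hDf i)
  have hpd : pd α (gaugeDeriv c A D β f) x
      = pd α (pd β f) x
        - c • ∑ i, (pd α (A i β) x • D i (f x) + A i β x • D i (pd α f x)) := by
    calc pd α (gaugeDeriv c A D β f) x
        = pd α (pd β f) x - c • pd α (fun y => ∑ i, A i β y • D i (f y)) x := by
          unfold gaugeDeriv
          rw [pd, fderiv_fun_sub (differentiableAt_pd hf β) (hsum.fun_const_smul c),
            fderiv_fun_const_smul hsum]
          rfl
      _ = pd α (pd β f) x - c • ∑ i, pd α (fun y => A i β y • D i (f y)) x := by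
          rw [pd_sum fun i => (hA i β).fun_smul (hDf i)]
      _ = _ := by simp only [pd_smul (hA _ β) (hDf _), pd_clm_apply (D _) hfx]
  have hD (i : ι) : A i α x • D i (gaugeDeriv c A D β f x)
      = A i α x • D i (pd β f x) - c • ∑ j, (A i α x * A j β x) • D i (D j (f x)) := by
    simp only [gaugeDeriv, map_sub, map_smul, map_sum, smul_sub, mul_smul, ← Finset.smul_sum]
    rw [smul_comm]
  rw [gaugeDeriv, hpd]
  simp only [hD, Finset.sum_add_distrib, Finset.sum_sub_distrib, ← Finset.smul_sum]
  module

end PartialDerivative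

section MetricTrace

variable {κ ι W : Type*} [Fintype κ] [Fintype ι] [AddCommGroup W] [Module ℝ W] {g : κ → κ → ℝ}

/-- The trace `g^{αβ} X_{αβ}` of a bilinear expression `X` against an inverse metric `g`. -/
def metricTrace (g : κ → κ → ℝ) : (κ → κ → W) →ₗ[ℝ] W where
  toFun X := ∑ α, ∑ β, g α β • X α β
  map_add' X Y := by simp only [Pi.add_apply, smul_add, Finset.sum_add_distrib]
  map_smul' t X := by
    simp only [Pi.smul_apply, smul_comm _ t, ← Finset.smul_sum, RingHom.id_apply]

lemma metricTrace_apply (g : κ → κ → ℝ) (X : κ → κ → W) :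
    metricTrace g X = ∑ α, ∑ β, g α β • X α β := rfl

lemma sum_mul_eq_metricTrace (g s : κ → κ → ℝ) :
    ∑ α, ∑ β, s α β * g α β = metricTrace g s := by
  simp only [metricTrace_apply, smul_eq_mul, mul_comm]

lemma inverse_symm [DecidableEq κ] {G : κ → κ → ℝ} (hG : ∀ μ ν, G μ ν = G ν μ)
    (hinv : ∀ μ ν, ∑ ρ, G μ ρ * g ρ ν = if μ = ν then 1 else 0) (μ ν : κ) :
    g μ ν = g ν μ := by
  have hmul : Matrix.of G * Matrix.of g = 1 := by
    ext μ ν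
    simpa only [Matrix.mul_apply, Matrix.of_apply, Matrix.one_apply] using hinv μ ν
  have hsymm : (Matrix.of G).IsSymm := by
    ext μ ν
    exact hG ν μ
  have := hsymm.inv
  rw [Matrix.inv_eq_right_inv hmul] at this
  exact this.apply ν μ

lemma metricTrace_swap (hg : ∀ μ ν, g μ ν = g ν μ) (X : κ → κ → W) :
    metricTrace g (fun α β => X β α) = metricTrace g X := by
  rw [metricTrace_apply, Finset.sum_comm]
  simp only [metricTrace_apply, hg]

lemma metricTrace_smul_const (g s : κ → κ → ℝ) (w : W) :
    metricTrace g (fun α β => s α β • w) = metricTrace g s • w := by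
  simp only [metricTrace_apply, smul_smul, smul_eq_mul, Finset.sum_smul]

lemma metricTrace_sum_smul {τ : Type*} [Fintype τ] (g : κ → κ → ℝ) (s : τ → κ → κ → ℝ)
    (w : τ → W) :
    metricTrace g (fun α β => ∑ t, s t α β • w t) = ∑ t, metricTrace g (s t) • w t := by
  have hsum : (fun α β => ∑ t, s t α β • w t) = ∑ t, fun α β => s t α β • w t := by
    ext; simp only [Finset.sum_apply]
  rw [hsum, map_sum]
  simp only [metricTrace_smul_const]

lemma metricTrace_sub_sum_smul {τ : Type*} [Fintype τ] (g : κ → κ → ℝ) (X : κ → κ → W)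
    (s : τ → κ → κ → ℝ) (w : τ → W) :
    metricTrace g (fun α β => X α β - ∑ t, s t α β • w t)
      = metricTrace g X - ∑ t, metricTrace g (s t) • w t := by
  rw [← metricTrace_sum_smul, ← map_sub]
  rfl

lemma sum_antisymm_mul_symm_eq_zero {a s : ι → ι → ℝ} (ha : ∀ j k, a k j = -a j k)
    (hs : ∀ j k, s k j = s j k) : ∑ j, ∑ k, a j k * s j k = 0 := by
  have hneg : ∑ j, ∑ k, a j k * s j k = -∑ j, ∑ k, a j k * s j k := by
    rw [← Finset.sum_neg_distrib, Finset.sum_comm]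
    refine Finset.sum_congr rfl fun j _ => ?_
    rw [← Finset.sum_neg_distrib]
    exact Finset.sum_congr rfl fun k _ => by rw [ha, hs, neg_mul]
  linarith

end MetricTrace

section ConnectionCoefficients

/- The names refer to the quantum Levi-Civita connection (`qlc`) and to the blocks `h̃^{ij}`
(`internalMetric`) and `Ã^{αi}` (`mixedMetric`) of the inverse metric on the product. Here `a i μ`
is the value of `A_{iμ}` at a point, `b` is one of its rows `a i`, and `c` stands for `1/h`. -/

variable {κ ι W : Type*} [Fintype κ] [AddCommGroup W] [Module ℝ W]
  {g : κ → κ → ℝ} {a : ι → κ → ℝ} {c : ℝ} {At : κ → ι → ℝ}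

lemma internalMetric_eq_metricTrace [DecidableEq ι] (hg : ∀ μ ν, g μ ν = g ν μ) {ht : ι → ι → ℝ}
    (hht : ∀ i j, ht i j = c * (if i = j then 1 else 0)
      + c ^ 2 * ∑ μ, ∑ ν, g μ ν * a i ν * a j μ) (i j : ι) :
    ht i j = c * (if i = j then 1 else 0) + c ^ 2 * metricTrace g (fun α β => a i α * a j β) := by
  rw [hht, ← metricTrace_swap hg]
  simp only [metricTrace_apply, smul_eq_mul, mul_assoc]

lemma internalMetric_symm [DecidableEq ι] (hg : ∀ μ ν, g μ ν = g ν μ) {ht : ι → ι → ℝ}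
    (hht : ∀ i j, ht i j = c * (if i = j then 1 else 0)
      + c ^ 2 * ∑ μ, ∑ ν, g μ ν * a i ν * a j μ) (i j : ι) : ht j i = ht i j := by
  rw [internalMetric_eq_metricTrace hg hht j i, internalMetric_eq_metricTrace hg hht i j,
    ← metricTrace_swap hg]
  simp only [eq_comm, mul_comm]

variable [Fintype ι]

lemma sum_internalMetric_smul [DecidableEq ι] (hg : ∀ μ ν, g μ ν = g ν μ) {ht : ι → ι → ℝ}
    (hht : ∀ i j, ht i j = c * (if i = j then 1 else 0)
      + c ^ 2 * ∑ μ, ∑ ν, g μ ν * a i ν * a j μ) (R : ι → ι → W) :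
    ∑ i, ∑ j, ht i j • R i j
      = c • ∑ i, R i i
        + c ^ 2 • metricTrace g (fun α β => ∑ i, ∑ j, (a i α * a j β) • R i j) := by
  have htrace : metricTrace g (fun α β => ∑ i, ∑ j, (a i α * a j β) • R i j)
      = ∑ i, ∑ j, metricTrace g (fun α β => a i α * a j β) • R i j := by
    simpa only [Fintype.sum_prod_type] using
      metricTrace_sum_smul g (fun (p : ι × ι) α β => a p.1 α * a p.2 β) fun p => R p.1 p.2
  rw [htrace]
  simp only [internalMetric_eq_metricTrace hg hht, add_smul, mul_smul, ite_smul, one_smul,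
    zero_smul, Finset.sum_add_distrib, ← Finset.smul_sum, Finset.sum_ite_eq, Finset.mem_univ,
    if_true]

lemma sum_mixedMetric_smul (hAt : ∀ α i, At α i = -c * ∑ ν, g α ν * a i ν) (q : κ → ι → W) :
    ∑ α, ∑ i, At α i • q α i = -c • metricTrace g (fun α β => ∑ i, a i β • q α i) := by
  simp only [hAt, metricTrace_apply, mul_smul, Finset.sum_smul, Finset.smul_sum]
  exact Finset.sum_congr rfl fun α _ => Finset.sum_comm

lemma metricTrace_qlcΓ (hg : ∀ μ ν, g μ ν = g ν μ)
    (hAt : ∀ α i, At α i = -c * ∑ ν, g α ν * a i ν) {Γ Γt : κ → κ → ℝ} {F : κ → ι → ℝ}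
    (hΓ : ∀ α β, Γ α β = Γt α β - c * ∑ i, (a i α * F β i + a i β * F α i)) :
    metricTrace g Γ = metricTrace g Γt + 2 * ∑ α, ∑ i, F α i * At α i := by
  let Q : κ → κ → ℝ := fun α β => ∑ i, a i β * F α i
  have hQ : ∑ α, ∑ i, F α i * At α i = -c * metricTrace g Q := by
    simpa only [smul_eq_mul, mul_comm (F _ _)] using sum_mixedMetric_smul hAt F
  have hΓQ : Γ = Γt - c • ((fun α β => Q β α) + Q) := by
    ext α β
    simp [hΓ, Q, Finset.sum_add_distrib, mul_add]
  rw [hΓQ, map_sub, map_smul, map_add, metricTrace_swap hg Q, hQ, smul_eq_mul]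
  ring

lemma metricTrace_qlcE (hg : ∀ μ ν, g μ ν = g ν μ) {b : κ → ℝ} {db E : κ → κ → ℝ}
    {Γ : κ → κ → κ → ℝ}
    (hE : ∀ α β, E α β = -(c / 2) * (db α β + db β α - 2 * ∑ μ, b μ * Γ μ α β)) :
    metricTrace g E = -c * metricTrace g db + c * ∑ μ, b μ * metricTrace g (Γ μ) := by
  have hE' : E = -(c / 2) • (db + (fun α β => db β α) - (2 : ℝ) • ∑ μ, b μ • Γ μ) := by
    ext α β
    simp [hE]
  rw [hE', map_smul, map_sub, map_add, metricTrace_swap hg db, map_smul, map_sum]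
  simp only [map_smul, smul_eq_mul]
  ring

lemma sum_qlcB_mul_mixedMetric (hg : ∀ μ ν, g μ ν = g ν μ)
    (hAt : ∀ α i, At α i = -c * ∑ ν, g α ν * a i ν) {b : κ → ℝ} {F : κ → κ → ι → ℝ}
    {ε : ι → ι → ℝ} (hε : ∀ i j, ε j i = -ε i j) {B : κ → ι → ℝ}
    (hB : ∀ α i, B α i = -c * (∑ μ, b μ * F μ α i) - c / 2 * ∑ j, a j α * ε i j) :
    ∑ α, ∑ i, B α i * At α i = -c * ∑ μ, b μ * ∑ α, ∑ i, F μ α i * At α i := by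
  have hS (i j : ι) : ∑ α, At α j * a i α = ∑ α, At α i * a j α := by
    simp only [hAt, mul_assoc, Finset.sum_mul, ← Finset.mul_sum]
    rw [Finset.sum_comm]
    simp only [hg, mul_comm]
  have hε0 : ∑ α, ∑ i, (∑ j, a j α * ε i j) * At α i = 0 := by
    rw [← sum_antisymm_mul_symm_eq_zero hε hS, Finset.sum_comm]
    simp only [Finset.sum_mul, Finset.mul_sum]
    refine Finset.sum_congr rfl fun i _ => ?_
    rw [Finset.sum_comm]
    exact Finset.sum_congr rfl fun j _ => Finset.sum_congr rfl fun α _ => by ring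
  have hF : ∑ μ, b μ * ∑ α, ∑ i, F μ α i * At α i
      = ∑ α, ∑ i, (∑ μ, b μ * F μ α i) * At α i := by
    simp only [Finset.mul_sum, Finset.sum_mul, mul_assoc]
    rw [Finset.sum_comm]
    exact Finset.sum_congr rfl fun α _ => Finset.sum_comm
  simp only [hB, sub_mul, mul_assoc, Finset.sum_sub_distrib, ← Finset.mul_sum, hε0, hF]
  ring

end ConnectionCoefficients

section GaugeLaplacian

variable {n : ℕ} {ι W : Type*} [Fintype ι] [NormedAddCommGroup W] [NormedSpace ℝ W]
  {D : ι → W →L[ℝ] W} {f : (Fin n → ℝ) → W} {x : Fin n → ℝ}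
  {A : ι → Fin n → (Fin n → ℝ) → ℝ} {g : Fin n → Fin n → ℝ}

lemma metricTrace_gaugeDeriv_gaugeDeriv (c : ℝ) (hf : ContDiffAt ℝ 2 f x)
    (hA : ∀ i μ, DifferentiableAt ℝ (A i μ) x) (hg : ∀ μ ν, g μ ν = g ν μ) :
    metricTrace g (fun α β => gaugeDeriv c A D α (gaugeDeriv c A D β f) x)
      = metricTrace g (fun α β => pd α (pd β f) x)
        - c • ∑ i, metricTrace g (fun α β => pd α (A i β) x) • D i (f x)
        - (2 * c) • metricTrace g (fun α β => ∑ i, A i β x • D i (pd α f x))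
        + c ^ 2 • metricTrace g (fun α β => ∑ i, ∑ j, (A i α x * A j β x) • D i (D j (f x))) := by
  let P : Fin n → Fin n → W := fun α β => ∑ i, pd α (A i β) x • D i (f x)
  let Q : Fin n → Fin n → W := fun α β => ∑ i, A i β x • D i (pd α f x)
  let R : Fin n → Fin n → W := fun α β => ∑ i, ∑ j, (A i α x * A j β x) • D i (D j (f x))
  have hexpand : (fun α β => gaugeDeriv c A D α (gaugeDeriv c A D β f) x)
      = (fun α β => pd α (pd β f) x) - c • P - c • (Q + fun α β => Q β α) + c ^ 2 • R := by
    ext α β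
    exact gaugeDeriv_gaugeDeriv c D hA hf α β
  rw [hexpand, map_add, map_sub, map_sub, map_smul, map_smul, map_smul, map_add,
    metricTrace_swap hg Q, metricTrace_sum_smul]
  module

lemma sum_smul_gaugeDeriv (c : ℝ) (s : Fin n → ℝ) :
    ∑ μ, s μ • gaugeDeriv c A D μ f x
      = ∑ μ, s μ • pd μ f x - c • ∑ i, (∑ μ, A i μ x * s μ) • D i (f x) := by
  have hswap : ∑ i, (∑ μ, A i μ x * s μ) • D i (f x) = ∑ μ, s μ • ∑ i, A i μ x • D i (f x) := by
    simp only [Finset.sum_smul, Finset.smul_sum, smul_smul, mul_comm (A _ _ _)]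
    exact Finset.sum_comm
  rw [hswap]
  simp only [gaugeDeriv, smul_sub, Finset.sum_sub_distrib, smul_comm _ c, ← Finset.smul_sum]

lemma metricTrace_gaugeLaplacian (c : ℝ) (hf : ContDiffAt ℝ 2 f x)
    (hA : ∀ i μ, DifferentiableAt ℝ (A i μ) x) (hg : ∀ μ ν, g μ ν = g ν μ)
    (Γ : Fin n → Fin n → Fin n → ℝ) :
    metricTrace g (fun α β => gaugeDeriv c A D α (gaugeDeriv c A D β f) x
        - ∑ μ, Γ μ α β • gaugeDeriv c A D μ f x)
      = metricTrace g (fun α β => pd α (pd β f) x)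
        + c ^ 2 • metricTrace g (fun α β => ∑ i, ∑ j, (A i α x * A j β x) • D i (D j (f x)))
        - (2 * c) • metricTrace g (fun α β => ∑ i, A i β x • D i (pd α f x))
        + ∑ i, (-c * metricTrace g (fun α β => pd α (A i β) x)
            + c * ∑ μ, A i μ x * metricTrace g (Γ μ)) • D i (f x)
        - ∑ μ, metricTrace g (Γ μ) • pd μ f x := by
  rw [metricTrace_sub_sum_smul, metricTrace_gaugeDeriv_gaugeDeriv c hf hA hg, sum_smul_gaugeDeriv]
  simp only [add_smul, mul_smul, Finset.sum_add_distrib, ← Finset.smul_sum]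
  module

end GaugeLaplacian

theorem stmt15_general {n : ℕ} {ι W : Type*} [Fintype ι] [DecidableEq ι]
    [NormedAddCommGroup W] [NormedSpace ℝ W] (D : ι → W →L[ℝ] W) {c m : ℝ}
    {f : (Fin n → ℝ) → W} {x : Fin n → ℝ} (hf : ContDiffAt ℝ 2 f x)
    (hD : c • ∑ i, D i (D i (f x)) = -m • f x)
    {A : ι → Fin n → (Fin n → ℝ) → ℝ} (hA : ∀ i μ, DifferentiableAt ℝ (A i μ) x)
    {ε : ι → ι → ι → ℝ} (hε : ∀ i j k, ε i k j = -ε i j k)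
    {g : Fin n → Fin n → ℝ} (hg : ∀ μ ν, g μ ν = g ν μ)
    {At : Fin n → ι → ℝ} (hAt : ∀ α i, At α i = -c * ∑ ν, g α ν * A i ν x)
    {ht : ι → ι → ℝ} (hht : ∀ i j, ht i j = c * (if i = j then 1 else 0)
      + c ^ 2 * ∑ μ, ∑ ν, g μ ν * A i ν x * A j μ x)
    {Γt Γ : Fin n → Fin n → Fin n → ℝ} {F : Fin n → Fin n → ι → ℝ}
    (hΓ : ∀ σ μ ν, Γ σ μ ν = Γt σ μ ν - c * ∑ i, (A i μ x * F σ ν i + A i ν x * F σ μ i))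
    {Dq : Fin n → ι → ι → ℝ} (hDq : ∀ μ i j, Dq μ i j = 0)
    {E : ι → Fin n → Fin n → ℝ} (hE : ∀ k α β, E k α β = -(c / 2) *
      (pd α (A k β) x + pd β (A k α) x - 2 * ∑ μ, A k μ x * Γ μ α β))
    {B : ι → Fin n → ι → ℝ} (hB : ∀ k α i, B k α i = -c * (∑ μ, A k μ x * F μ α i)
      - c / 2 * ∑ j, A j α x * ε k i j)
    {H : ι → ι → ι → ℝ} (hH : ∀ i j k, H i j k = -(1 / 2) * ε i j k) :
    (∑ α, ∑ β, g α β • pd α (pd β f) x)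
      + (∑ i, ∑ j, ht i j • D i (D j (f x)))
      + 2 • (∑ α, ∑ i, At α i • pd α (fun y => D i (f y)) x)
      + (∑ i, ((∑ α, ∑ β, E i α β * g α β)
            + 2 * (∑ α, ∑ j, B i α j * At α j)
            + ∑ j, ∑ k, H i j k * ht j k) • D i (f x))
      + (∑ μ, (-(∑ α, ∑ β, Γ μ α β * g α β)
            + 2 * (∑ α, ∑ j, F μ α j * At α j)
            + ∑ j, ∑ k, Dq μ j k * ht j k) • pd μ f x)
      = (∑ α, ∑ β, g α β • (gaugeDeriv c A D α (gaugeDeriv c A D β f) x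
          - ∑ μ, Γt μ α β • gaugeDeriv c A D μ f x)) - m • f x := by
  have hcoefD (i : ι) : (∑ α, ∑ β, E i α β * g α β) + 2 * (∑ α, ∑ j, B i α j * At α j)
      + ∑ j, ∑ k, H i j k * ht j k
      = -c * metricTrace g (fun α β => pd α (A i β) x)
        + c * ∑ μ, A i μ x * metricTrace g (Γt μ) := by
    have hH0 : ∑ j, ∑ k, H i j k * ht j k = 0 :=
      sum_antisymm_mul_symm_eq_zero (fun j k => by rw [hH, hH, hε, mul_neg])
        (internalMetric_symm hg hht)
    rw [sum_mul_eq_metricTrace, metricTrace_qlcE hg (hE i), hH0,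
      sum_qlcB_mul_mixedMetric hg hAt (hε i) (hB i)]
    simp only [metricTrace_qlcΓ hg hAt (hΓ _), mul_add, Finset.sum_add_distrib,
      mul_left_comm _ (2 : ℝ), ← Finset.mul_sum]
    ring
  have hcoefpd (μ : Fin n) : -(∑ α, ∑ β, Γ μ α β * g α β) + 2 * (∑ α, ∑ j, F μ α j * At α j)
      + ∑ j, ∑ k, Dq μ j k * ht j k = -metricTrace g (Γt μ) := by
    rw [sum_mul_eq_metricTrace, metricTrace_qlcΓ hg hAt (hΓ μ)]
    simp only [hDq, zero_mul, Finset.sum_const_zero]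
    ring
  simp only [← metricTrace_apply g, metricTrace_gaugeLaplacian c hf hA hg, hcoefD, hcoefpd,
    pd_clm_apply (D _) (hf.differentiableAt two_ne_zero), sum_mixedMetric_smul hAt,
    sum_internalMetric_smul hg hht, hD, neg_smul, Finset.sum_neg_distrib]
  module

/-- The QRG Laplacian on the product of spacetime and a constant round fuzzy sphere of
metric `h δ_{ij}`, acting on a totally symmetric traceless tensor-valued field, equals the
gauge-covariant Laplacian for the effective metric `g̃` minus the mass term `l(l+1)/h`. -/
theorem stmt15 (n l : ℕ) (hn : 1 ≤ n)
    (U : Set (Fin n → ℝ)) (hU : IsOpen U)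
    (gt gtinv : Fin n → Fin n → (Fin n → ℝ) → ℝ)
    (A : Fin 3 → Fin n → (Fin n → ℝ) → ℝ)
    (h0 : ℝ) (hh0 : 0 < h0)
    (hgt_smooth : ∀ μ ν, ContDiffOn ℝ (⊤ : ℕ∞) (gt μ ν) U)
    (hgtinv_smooth : ∀ μ ν, ContDiffOn ℝ (⊤ : ℕ∞) (gtinv μ ν) U)
    (hA_smooth : ∀ i μ, ContDiffOn ℝ (⊤ : ℕ∞) (A i μ) U)
    (hgt_symm : ∀ μ ν x, gt μ ν x = gt ν μ x)
    (hgt_inv : ∀ x ∈ U, ∀ μ ν, ∑ ρ, gt μ ρ x * gtinv ρ ν x = if μ = ν then 1 else 0)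
    (hgt_inv' : ∀ x ∈ U, ∀ μ ν, ∑ ρ, gtinv μ ρ x * gt ρ ν x = if μ = ν then 1 else 0)
    -- Ã^{αi}
    (At : Fin n → Fin 3 → (Fin n → ℝ) → ℝ)
    (hAt : ∀ α i x, At α i x = -(1/h0) * ∑ ν, gtinv α ν x * A i ν x)
    -- h̃^{ij}
    (ht : Fin 3 → Fin 3 → (Fin n → ℝ) → ℝ)
    (hht : ∀ i j x, ht i j x = (1/h0) * (if i = j then 1 else 0)
        + (1/h0^2) * ∑ μ, ∑ ν, gtinv μ ν x * A i ν x * A j μ x)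
    -- Γ̃
    (Γt : Fin n → Fin n → Fin n → (Fin n → ℝ) → ℝ)
    (hΓt : ∀ σ μ ν x, Γt σ μ ν x = (1/2) * ∑ ρ, gtinv σ ρ x *
        (pd μ (gt ν ρ) x + pd ν (gt μ ρ) x - pd ρ (gt μ ν) x))
    -- the quantum Levi-Civita connection coefficients
    (F : Fin n → Fin n → Fin 3 → (Fin n → ℝ) → ℝ)
    (hF : ∀ μ' β i x, F μ' β i x = (1/2) * ∑ α, gtinv α μ' x *
        (pd α (A i β) x - pd β (A i α) x - (1/h0) * ∑ j, ∑ k, eps i j k * A j α x * A k β x))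
    (Γ : Fin n → Fin n → Fin n → (Fin n → ℝ) → ℝ)
    (hΓ : ∀ σ μ ν x, Γ σ μ ν x = Γt σ μ ν x
        - (1/h0) * ∑ i, (A i μ x * F σ ν i x + A i ν x * F σ μ i x))
    (Dq : Fin n → Fin 3 → Fin 3 → (Fin n → ℝ) → ℝ)
    (hDq : ∀ μ i j x, Dq μ i j x = 0)
    (E : Fin 3 → Fin n → Fin n → (Fin n → ℝ) → ℝ)
    (hE : ∀ k α β x, E k α β x = -(1/(2*h0)) *
        (pd α (A k β) x + pd β (A k α) x - 2 * ∑ μ, A k μ x * Γ μ α β x))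
    (B : Fin 3 → Fin n → Fin 3 → (Fin n → ℝ) → ℝ)
    (hB : ∀ k α i x, B k α i x = -(1/h0) * (∑ μ, A k μ x * F μ α i x)
        - (1/(2*h0)) * ∑ j, A j α x * eps k i j)
    (H : Fin 3 → Fin 3 → Fin 3 → ℝ)
    (hH : ∀ i j k, H i j k = -(1/2) * eps i j k)
    -- the tensor-valued field
    (f : (Fin n → ℝ) → (Fin l → Fin 3) → ℂ)
    (hf_smooth : ContDiffOn ℝ (⊤ : ℕ∞) f U)
    (hf_sym : ∀ x ∈ U, IsTotallySymmetric l (f x))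
    (hf_trace : ∀ x ∈ U, IsTraceless l (f x))
    -- the gauge-covariant derivative ∂_β − (1/h) A_{iβ} D_i
    (CD : Fin n → ((Fin n → ℝ) → (Fin l → Fin 3) → ℂ) → ((Fin n → ℝ) → (Fin l → Fin 3) → ℂ))
    (hCD : ∀ β u x, CD β u x = pd β u x - (1/h0) • ∑ i, A i β x • Dop l i (u x)) :
    ∀ x ∈ U,
      (∑ α, ∑ β, gtinv α β x • pd α (pd β f) x)
      + (∑ i, ∑ j, ht i j x • Dop l i (Dop l j (f x)))
      + 2 • (∑ α, ∑ i, At α i x • pd α (fun y => Dop l i (f y)) x)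
      + (∑ i, ((∑ α, ∑ β, E i α β x * gtinv α β x)
            + 2 * (∑ α, ∑ j, B i α j x * At α j x)
            + ∑ j, ∑ k, H i j k * ht j k x) • Dop l i (f x))
      + (∑ μ, (-(∑ α, ∑ β, Γ μ α β x * gtinv α β x)
            + 2 * (∑ α, ∑ j, F μ α j x * At α j x)
            + ∑ j, ∑ k, Dq μ j k x * ht j k x) • pd μ f x)
      = (∑ α, ∑ β, gtinv α β x • (CD α (CD β f) x - ∑ μ, Γt μ α β x • CD μ f x))
        - ((l * (l + 1) : ℝ) / h0) • f x := by
  intro x hx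
  obtain rfl : CD = gaugeDeriv (1 / h0) A (DopL l) := by
    funext β u y
    exact hCD β u y
  have hxU : U ∈ nhds x := hU.mem_nhds hx
  have hcasimir : (1 / h0) • ∑ i, DopL l i (DopL l i (f x)) = -((l * (l + 1) : ℝ) / h0) • f x :=
    (congrArg _ (sum_Dop_Dop (hf_sym x hx) (hf_trace x hx))).trans (by module)
  exact stmt15_general (DopL l) ((hf_smooth.contDiffAt hxU).of_le (by norm_cast)) hcasimir
    (fun i μ => ((hA_smooth i μ).contDiffAt hxU).differentiableAt (by simp)) eps_swap_right
    (inverse_symm (hgt_symm · · x) (hgt_inv x hx)) (hAt · · x)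
    (fun i j => by rw [hht, one_div_pow]) (hΓ · · · x) (hDq · · · x)
    (fun k α β => by rw [hE]; ring) (fun k α i => by rw [hB]; ring) hH
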